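/- Let n ≥ 1 and define the matrix A : Matrix (Fin n) (Fin n) ℝ by A(i,j) = 1/(2i + 2j + 1), where i, j ∈ {0, 1, ..., n-1} are 0-indexed (so the (1,1), 1-indexed, entry is 1 and the first row is 1, 1/3, 1/5, ...). Then A is invertible and the sum of all entries of A⁻¹ equals 2n² - n. -/

import Mathlib

/-- The Hilbert-type matrix with entries `1/(2i+2j+1)` (0-indexed). -/
noncomputable def hilbertOdd (n : ℕ) : Matrix (Fin n) (Fin n) ℝ :=
  Matrix.of fun i j => 1 / (2 * ((i : ℕ) : ℝ) + 2 * ((j : ℕ) : ℝ) + 1)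

open Polynomial Lagrange in
theorem hilbertOdd_aux (n : ℕ) (r : Fin n → ℝ) (i : Fin n) :
    eval (2 * ((i : ℕ) : ℝ)) (interpolate Finset.univ
        (fun j : Fin n => -(2 * ((j : ℕ) : ℝ) + 1)) r) =
      eval (2 * ((i : ℕ) : ℝ)) (nodal Finset.univ (fun j : Fin n => -(2 * ((j : ℕ) : ℝ) + 1))) *
      (hilbertOdd n).mulVec
        (fun j => nodalWeight Finset.univ (fun j : Fin n => -(2 * ((j : ℕ) : ℝ) + 1)) j * r j) i := by
  rw [eval_interpolate_not_at_node]
  · congr 1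
    simp only [Matrix.mulVec, dotProduct, hilbertOdd, Matrix.of_apply]
    refine Finset.sum_congr rfl fun j _ => ?_
    rw [one_div, show 2 * ((i : ℕ) : ℝ) - -(2 * ((j : ℕ) : ℝ) + 1)
      = 2 * ((i : ℕ) : ℝ) + 2 * ((j : ℕ) : ℝ) + 1 by ring]
    ring
  · intro j _ h
    have h1 : (0 : ℝ) ≤ ((i : ℕ) : ℝ) := Nat.cast_nonneg _
    have h2 : (0 : ℝ) ≤ ((j : ℕ) : ℝ) := Nat.cast_nonneg _
    linarith

theorem hilbertOdd_inj1 (n : ℕ) :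
    Function.Injective (fun j : Fin n => -(2 * ((j : ℕ) : ℝ) + 1)) := by
  intro a b h
  have : ((a : ℕ) : ℝ) = ((b : ℕ) : ℝ) := by
    simp only at h
    linarith
  exact Fin.ext (by exact_mod_cast this)

theorem hilbertOdd_inj2 (n : ℕ) :
    Function.Injective (fun j : Fin n => (2 * ((j : ℕ) : ℝ))) := by
  intro a b h
  have : ((a : ℕ) : ℝ) = ((b : ℕ) : ℝ) := by
    simp only at h
    linarith
  exact Fin.ext (by exact_mod_cast this)

open Polynomial Lagrange in
theorem hilbertOdd_isUnit (n : ℕ) : IsUnit (hilbertOdd n) := by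
  rw [Matrix.isUnit_iff_isUnit_det, isUnit_iff_ne_zero]
  intro h0
  obtain ⟨x, hx0, hx⟩ := Matrix.exists_mulVec_eq_zero_iff.mpr h0
  apply hx0
  have hw : ∀ j : Fin n,
      nodalWeight Finset.univ (fun j : Fin n => -(2 * ((j : ℕ) : ℝ) + 1)) j ≠ 0 := fun j =>
    nodalWeight_ne_zero (hilbertOdd_inj1 n).injOn (Finset.mem_univ j)
  set w := nodalWeight Finset.univ (fun j : Fin n => -(2 * ((j : ℕ) : ℝ) + 1)) with hwdef
  have hP : interpolate Finset.univ
        (fun j : Fin n => -(2 * ((j : ℕ) : ℝ) + 1)) (fun j => (w j)⁻¹ * x j) = 0 := by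
    refine eq_zero_of_degree_lt_of_eval_index_eq_zero (s := Finset.univ)
      (v := fun j : Fin n => (2 * ((j : ℕ) : ℝ))) (hilbertOdd_inj2 n).injOn
      (degree_interpolate_lt _ (hilbertOdd_inj1 n).injOn) ?_
    intro i _
    rw [hilbertOdd_aux]
    have : (fun j => w j * ((w j)⁻¹ * x j)) = x := by
      funext j
      rw [mul_inv_cancel_left₀ (hw j)]
    rw [← hwdef, this, hx]
    simp
  funext j
  have h := eval_interpolate_at_node (fun j => (w j)⁻¹ * x j)
    (hilbertOdd_inj1 n).injOn (Finset.mem_univ j)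
  rw [hP] at h
  simpa [hw j] using h.symm

open Polynomial Lagrange in
/-- The matrix `A(i,j) = 1/(2i+2j+1)` (0-indexed) is invertible and the sum of all
entries of its inverse equals `2n² - n`. -/
theorem hilbertOdd_inverse_entry_sum (n : ℕ) (hn : 1 ≤ n) :
    IsUnit (hilbertOdd n) ∧
      ∑ i, ∑ j, (hilbertOdd n)⁻¹ i j = 2 * (n : ℝ) ^ 2 - n := by
  refine ⟨hilbertOdd_isUnit n, ?_⟩
  set v : Fin n → ℝ := fun j => -(2 * ((j : ℕ) : ℝ) + 1) with hv
  set u : Fin n → ℝ := fun j => 2 * ((j : ℕ) : ℝ) with hu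
  set R : ℝ[X] := nodal Finset.univ v - nodal Finset.univ u with hR
  have hdeg : R.degree < (Finset.univ : Finset (Fin n)).card := by
    have := degree_sub_lt (p := nodal Finset.univ v) (q := nodal Finset.univ u)
      (by rw [degree_nodal, degree_nodal]) nodal_ne_zero
      (by rw [nodal_monic.leadingCoeff, nodal_monic.leadingCoeff])
    rwa [degree_nodal] at this
  set y : Fin n → ℝ := fun j => nodalWeight Finset.univ v j * eval (v j) R with hy
  have hAy : (hilbertOdd n).mulVec y = fun _ => 1 := by
    funext i
    have h := hilbertOdd_aux n (fun j => eval (v j) R) i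
    rw [← hv, ← eq_interpolate (hilbertOdd_inj1 n).injOn hdeg] at h
    have h0 : eval (u i) (nodal Finset.univ u) = 0 := eval_nodal_at_node (Finset.mem_univ i)
    have h1 : eval (u i) (nodal Finset.univ v) ≠ 0 := by
      apply eval_nodal_not_at_node
      intro j _ h
      have h1 : (0 : ℝ) ≤ ((i : ℕ) : ℝ) := Nat.cast_nonneg _
      have h2 : (0 : ℝ) ≤ ((j : ℕ) : ℝ) := Nat.cast_nonneg _
      simp only [hu, hv] at h
      linarith
    change eval (u i) R = eval (u i) (nodal Finset.univ v) * (hilbertOdd n).mulVec y i at h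
    rw [hR, eval_sub, h0, sub_zero] at h
    exact mul_left_cancel₀ h1 (by rw [← h, mul_one])
  have hinv : (hilbertOdd n)⁻¹.mulVec (fun _ => 1) = y := by
    rw [← hAy, Matrix.mulVec_mulVec, Matrix.nonsing_inv_mul _
      ((Matrix.isUnit_iff_isUnit_det _).mp (hilbertOdd_isUnit n)), Matrix.one_mulVec]
  have hsum : ∑ i, ∑ j, (hilbertOdd n)⁻¹ i j = ∑ i, y i := by
    rw [← hinv]
    simp [Matrix.mulVec, dotProduct]
  have hc := coeff_eq_sum (hilbertOdd_inj1 n).injOn hdeg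
  have hys : ∑ i, y i = R.coeff ((Finset.univ : Finset (Fin n)).card - 1) := by
    rw [hc]
    refine Finset.sum_congr rfl fun j _ => ?_
    simp only [hy, nodalWeight, Finset.prod_inv_distrib]
    rw [div_eq_mul_inv, mul_comm]
  have hpos : 0 < (Finset.univ : Finset (Fin n)).card := by rw [Finset.card_univ, Fintype.card_fin]; omega
  rw [hsum, hys, hR, coeff_sub, nodal_eq, nodal_eq, prod_X_sub_C_coeff_card_pred _ _ hpos,
    prod_X_sub_C_coeff_card_pred _ _ hpos, hu, hv,
    Fin.sum_univ_eq_sum_range (fun j : ℕ => -(2 * (j : ℝ) + 1)),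
    Fin.sum_univ_eq_sum_range (fun j : ℕ => 2 * (j : ℝ))]
  clear * -
  induction n with
  | zero => simp
  | succ k ih =>
    rw [Finset.sum_range_succ, Finset.sum_range_succ]
    push_cast
    linarith
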